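/- Let K be any field, and let G_45 ⊆ S_8 be the subgroup of order 576 generated by (1,3)(2,4), (2,3,4), (1,2)(5,6), and κ = (1,5)(2,6)(3,7)(4,8). Then the fixed field K(x_1,…,x_8)^{G_45} is K-rational. -/

import Mathlib

noncomputable section

/-- The rational function field `K(x_i : i ∈ I)` over `K`, realized as the fraction field
of the multivariate polynomial ring. -/
abbrev RFF (K : Type) [Field K] (I : Type) := FractionRing (MvPolynomial I K)

/-- The image of the variable `x_i` in the rational function field `K(x_i : i ∈ I)`. -/
noncomputable def Xvar (K : Type) [Field K] (I : Type) (i : I) : RFF K I :=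
  algebraMap (MvPolynomial I K) (RFF K I) (MvPolynomial.X i)

/-- Permutations of the variables as `K`-algebra automorphisms of the polynomial ring. -/
def renameHom (K : Type) [Field K] (I : Type) :
    Equiv.Perm I →* (MvPolynomial I K ≃ₐ[K] MvPolynomial I K) where
  toFun σ := MvPolynomial.renameEquiv K σ
  map_one' := MvPolynomial.renameEquiv_refl K
  map_mul' σ τ := (MvPolynomial.renameEquiv_trans K τ σ).symm

/-- The action of permutations of the variables on `K(x_i : i ∈ I)` by `K`-automorphisms,
determined by `σ(x_i) = x_{σ(i)}`. -/
noncomputable def permHom (K : Type) [Field K] (I : Type) :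
    Equiv.Perm I →* (RFF K I ≃ₐ[K] RFF K I) :=
  (IsFractionRing.fieldEquivOfAlgEquivHom K (RFF K I)).comp (renameHom K I)

/-- The fixed field `K(x_i : i ∈ I)^G` of a group `G` of permutations of the variables. -/
noncomputable def fixedSub (K : Type) [Field K] (I : Type) (G : Subgroup (Equiv.Perm I)) :
    IntermediateField K (RFF K I) :=
  IntermediateField.fixedField (G.map (permHom K I))

/-- An extension `L/K` is `K`-rational if it is purely transcendental over `K`, i.e. generated
by finitely many algebraically independent elements. -/
def IsRatExt (K : Type) [Field K] (L : Type*) [Field L] [Algebra K L] : Prop :=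
  ∃ (n : ℕ) (t : Fin n → L), AlgebraicIndependent K t ∧
    IntermediateField.adjoin K (Set.range t) = ⊤

open Polynomial IntermediateField in
lemma step_aux {K L : Type} [Field K] [Field L] [Algebra K L] (F : IntermediateField K L)
    (y : L) (p : F[X]) (hp : p.Monic) (hy : aeval y p = 0) (n : ℕ) (hn : p.natDegree = n) :
    ∃ E : IntermediateField K L, F ≤ E ∧ y ∈ E ∧ relrank F E ≤ n := by
  have hIntegral : IsIntegral F y := ⟨p, hp, by simpa [aeval_def] using hy⟩
  have hle : F ≤ restrictScalars K (IntermediateField.adjoin F {y}) := by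
    intro z hz
    rw [mem_restrictScalars]
    exact (IntermediateField.adjoin F {y}).algebraMap_mem ⟨z, hz⟩
  refine ⟨restrictScalars K (IntermediateField.adjoin F {y}), hle, ?_, ?_⟩
  · rw [mem_restrictScalars]
    exact mem_adjoin_simple_self F y
  · rw [relrank_eq_rank_of_le hle]
    have : extendScalars hle = IntermediateField.adjoin F {y} := by
      ext z; simp [mem_extendScalars, mem_restrictScalars]
    rw [this]
    have := adjoin.finiteDimensional hIntegral
    rw [← Module.finrank_eq_rank, adjoin.finrank hIntegral]
    have h2 := natDegree_le_of_dvd (minpoly.dvd F y hy) hp.ne_zero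
    exact_mod_cast h2.trans hn.le

open Polynomial IntermediateField in
lemma step4 {K L : Type} [Field K] [Field L] [Algebra K L] (F : IntermediateField K L)
    (y a b c d : L) (ha : a ∈ F) (hb : b ∈ F) (hc : c ∈ F) (hd : d ∈ F)
    (hy : y ^ 4 + a * y ^ 3 + b * y ^ 2 + c * y + d = 0) :
    ∃ E : IntermediateField K L, F ≤ E ∧ y ∈ E ∧ relrank F E ≤ (4 : ℕ) := by
  refine step_aux F y (X ^ 4 + C ⟨a, ha⟩ * X ^ 3 + C ⟨b, hb⟩ * X ^ 2 + C ⟨c, hc⟩ * X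
    + C ⟨d, hd⟩) ?_ ?_ 4 ?_
  · monicity!
  · simpa using hy
  · compute_degree!

open Polynomial IntermediateField in
lemma step3 {K L : Type} [Field K] [Field L] [Algebra K L] (F : IntermediateField K L)
    (y b c d : L) (hb : b ∈ F) (hc : c ∈ F) (hd : d ∈ F)
    (hy : y ^ 3 + b * y ^ 2 + c * y + d = 0) :
    ∃ E : IntermediateField K L, F ≤ E ∧ y ∈ E ∧ relrank F E ≤ (3 : ℕ) := by
  refine step_aux F y (X ^ 3 + C ⟨b, hb⟩ * X ^ 2 + C ⟨c, hc⟩ * X + C ⟨d, hd⟩) ?_ ?_ 3 ?_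
  · monicity!
  · simpa using hy
  · compute_degree!

/-- The V4-invariant resolvent. -/
def rr {L : Type} [Field L] (a b c d : L) : L := (a * b - c * d) / (a + b - c - d)

/-- Masuda's C3-invariant. -/
def mu {L : Type} [Field L] (a b c : L) : L :=
  (a ^ 2 * b + b ^ 2 * c + c ^ 2 * a - 3 * a * b * c) /
    (a ^ 2 + b ^ 2 + c ^ 2 - a * b - b * c - c * a)

lemma quart_T {L : Type} [Field L] {a b c d r1 r2 r3 : L}
    (h1 : a + b - c - d ≠ 0) (h2 : a + c - b - d ≠ 0) (h3 : a + d - b - c ≠ 0)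
    (hr1 : r1 = rr a b c d) (hr2 : r2 = rr a c b d) (hr3 : r3 = rr a d b c) :
    a * b + c * d = (a + b + c + d) * r1 - 2 * r1 * r2 - 2 * r1 * r3 + 2 * r2 * r3 := by
  subst hr1 hr2 hr3
  unfold rr
  field_simp
  ring

lemma quart_s3 {L : Type} [Field L] {a b c d r1 r2 r3 : L}
    (h1 : a + b - c - d ≠ 0) (h2 : a + c - b - d ≠ 0) (h3 : a + d - b - c ≠ 0)
    (hr1 : r1 = rr a b c d) (hr2 : r2 = rr a c b d) (hr3 : r3 = rr a d b c) :
    a * b * c + a * b * d + a * c * d + b * c * d =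
      (a + b + c + d) * (r1 * r2 + r1 * r3 + r2 * r3) - 8 * r1 * r2 * r3 := by
  subst hr1 hr2 hr3
  unfold rr
  field_simp
  ring

lemma quart_s4 {L : Type} [Field L] {a b c d r1 r2 r3 : L}
    (h1 : a + b - c - d ≠ 0) (h2 : a + c - b - d ≠ 0) (h3 : a + d - b - c ≠ 0)
    (hr1 : r1 = rr a b c d) (hr2 : r2 = rr a c b d) (hr3 : r3 = rr a d b c) :
    a * b * c * d = (a + b + c + d) * (r1 * r2 * r3) - 4 * (r1 + r2 + r3) * (r1 * r2 * r3)
      + (r1 * r2 + r1 * r3 + r2 * r3) ^ 2 := by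
  subst hr1 hr2 hr3
  unfold rr
  field_simp
  ring

lemma quart_solve {L : Type} [Field L] {a b c d : L} (h3 : a - c ≠ 0) (h4 : a - d ≠ 0) :
    b = (b * c * d - a * ((b * c + b * d + c * d) - (a * b + c * d))) /
      ((a * b + c * d) - a * (b + c + d - a)) := by
  have : (a * b + c * d) - a * (b + c + d - a) = (a - c) * (a - d) := by ring
  rw [this]
  field_simp
  ring

lemma mem_num {K L : Type} [Field K] [Field L] [Algebra K L] (F : IntermediateField K L)
    (n : ℕ) [n.AtLeastTwo] : (OfNat.ofNat n : L) ∈ F := ofNat_mem F n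

lemma quart_mem {K L : Type} [Field K] [Field L] [Algebra K L] (F : IntermediateField K L)
    {a b c d : L} (h3 : a - c ≠ 0) (h4 : a - d ≠ 0) (ha : a ∈ F)
    (hs1 : a + b + c + d ∈ F) (hs2 : a * b + a * c + a * d + b * c + b * d + c * d ∈ F)
    (hs3 : a * b * c + a * b * d + a * c * d + b * c * d ∈ F)
    (hT : a * b + c * d ∈ F) : b ∈ F := by
  have c1 : b + c + d ∈ F := by
    have := sub_mem hs1 ha
    convert this using 1; ring
  have c2 : b * c + b * d + c * d ∈ F := by
    have := sub_mem hs2 (mul_mem ha c1)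
    convert this using 1; ring
  have c3 : b * c * d ∈ F := by
    have := sub_mem hs3 (mul_mem ha c2)
    convert this using 1; ring
  rw [quart_solve (b := b) h3 h4]
  exact div_mem (sub_mem c3 (mul_mem ha (sub_mem c2 hT)))
    (sub_mem hT (mul_mem ha (sub_mem c1 ha)))

open IntermediateField in
lemma quart {K L : Type} [Field K] [Field L] [Algebra K L] (F : IntermediateField K L)
    {a b c d r1 r2 r3 : L}
    (h1 : a + b - c - d ≠ 0) (h2 : a + c - b - d ≠ 0) (h3 : a + d - b - c ≠ 0)
    (hab : a - b ≠ 0) (hac : a - c ≠ 0) (had : a - d ≠ 0)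
    (hr1 : r1 = rr a b c d) (hr2 : r2 = rr a c b d) (hr3 : r3 = rr a d b c)
    (hs : a + b + c + d ∈ F) (m1 : r1 ∈ F) (m2 : r2 ∈ F) (m3 : r3 ∈ F) :
    ∃ E : IntermediateField K L, F ≤ E ∧ a ∈ E ∧ b ∈ E ∧ c ∈ E ∧ d ∈ E ∧
      relrank F E ≤ (4 : ℕ) := by
  have n2 : (2 : L) ∈ F := mem_num F 2
  have n4 : (4 : L) ∈ F := mem_num F 4
  have n8 : (8 : L) ∈ F := mem_num F 8
  have hT1 : a * b + c * d ∈ F := by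
    rw [quart_T h1 h2 h3 hr1 hr2 hr3]
    exact add_mem (sub_mem (sub_mem (mul_mem hs m1) (mul_mem (mul_mem n2 m1) m2))
      (mul_mem (mul_mem n2 m1) m3)) (mul_mem (mul_mem n2 m2) m3)
  have hT2 : a * c + b * d ∈ F := by
    have hs' : a + c + b + d ∈ F := by convert hs using 1; ring
    have hr3' : r3 = rr a d c b := by rw [hr3]; unfold rr; congr 1 <;> ring
    rw [quart_T h2 h1 (by convert h3 using 1; ring) hr2 hr1 hr3']
    exact add_mem (sub_mem (sub_mem (mul_mem hs' m2) (mul_mem (mul_mem n2 m2) m1))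
      (mul_mem (mul_mem n2 m2) m3)) (mul_mem (mul_mem n2 m1) m3)
  have hT3 : a * d + b * c ∈ F := by
    have hs' : a + d + b + c ∈ F := by convert hs using 1; ring
    have hr1' : r1 = rr a b d c := by rw [hr1]; unfold rr; congr 1 <;> ring
    have hr2' : r2 = rr a c d b := by rw [hr2]; unfold rr; congr 1 <;> ring
    rw [quart_T h3 (by convert h1 using 1; ring) (by convert h2 using 1; ring) hr3 hr1' hr2']
    exact add_mem (sub_mem (sub_mem (mul_mem hs' m3) (mul_mem (mul_mem n2 m3) m1))
      (mul_mem (mul_mem n2 m3) m2)) (mul_mem (mul_mem n2 m1) m2)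
  have hs2 : a * b + a * c + a * d + b * c + b * d + c * d ∈ F := by
    have := add_mem (add_mem hT1 hT2) hT3
    convert this using 1; ring
  have he2 := add_mem (add_mem (mul_mem m1 m2) (mul_mem m1 m3)) (mul_mem m2 m3)
  have he3 := mul_mem (mul_mem m1 m2) m3
  have hs3 : a * b * c + a * b * d + a * c * d + b * c * d ∈ F := by
    rw [quart_s3 h1 h2 h3 hr1 hr2 hr3]
    exact sub_mem (mul_mem hs he2) (mul_mem (mul_mem (mul_mem n8 m1) m2) m3)
  have hs4 : a * b * c * d ∈ F := by
    rw [quart_s4 h1 h2 h3 hr1 hr2 hr3]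
    exact add_mem (sub_mem (mul_mem hs he3)
      (mul_mem (mul_mem n4 (add_mem (add_mem m1 m2) m3)) he3)) (pow_mem he2 2)
  obtain ⟨E, hE, haE, hd⟩ := step4 F a _ _ _ _ (neg_mem hs) hs2 (neg_mem hs3) hs4 (by ring)
  refine ⟨E, hE, haE, ?_, ?_, ?_, hd⟩
  · exact quart_mem E hac had haE (hE hs) (hE hs2) (hE hs3) (hE hT1)
  · refine quart_mem E (b := c) (c := b) (d := d) hab had haE ?_ ?_ ?_ (hE hT2)
    · convert hE hs using 1; ring
    · convert hE hs2 using 1; ring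
    · convert hE hs3 using 1; ring
  · refine quart_mem E (b := d) (c := b) (d := c) hab hac haE ?_ ?_ ?_ (hE hT3)
    · convert hE hs using 1; ring
    · convert hE hs2 using 1; ring
    · convert hE hs3 using 1; ring

/-- The denominator of Masuda's invariants. -/
def dd {L : Type} [Field L] (a b c : L) : L := a ^ 2 + b ^ 2 + c ^ 2 - a * b - b * c - c * a

lemma cubic_e2 {L : Type} [Field L] {a b c u v : L} (h : dd a b c ≠ 0)
    (hu : u = mu a b c) (hv : v = mu b a c) :
    a * b + a * c + b * c = (a + b + c) * (u + v) - 3 * (u ^ 2 - u * v + v ^ 2) := by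
  have hu' : u * dd a b c = a ^ 2 * b + b ^ 2 * c + c ^ 2 * a - 3 * a * b * c := by
    rw [hu]; exact div_mul_cancel₀ _ h
  have hv' : v * dd a b c = b ^ 2 * a + a ^ 2 * c + c ^ 2 * b - 3 * a * b * c := by
    have e : dd a b c = b ^ 2 + a ^ 2 + c ^ 2 - b * a - a * c - c * b := by unfold dd; ring
    rw [hv, e]
    rw [e] at h
    exact (div_mul_cancel₀ _ h).trans (by ring)
  apply mul_left_cancel₀ (pow_ne_zero 2 h)
  have : dd a b c ^ 2 * ((a + b + c) * (u + v) - 3 * (u ^ 2 - u * v + v ^ 2)) =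
    dd a b c * (a + b + c) * (u * dd a b c + v * dd a b c) - 3 * ((u * dd a b c) ^ 2
      - (u * dd a b c) * (v * dd a b c) + (v * dd a b c) ^ 2) := by ring
  rw [this, hu', hv']
  unfold dd
  ring

lemma cubic_e3 {L : Type} [Field L] {a b c u v : L} (h : dd a b c ≠ 0)
    (hu : u = mu a b c) (hv : v = mu b a c) :
    a * b * c = (a + b + c) * u * v - u ^ 3 - v ^ 3 := by
  have hu' : u * dd a b c = a ^ 2 * b + b ^ 2 * c + c ^ 2 * a - 3 * a * b * c := by
    rw [hu]; exact div_mul_cancel₀ _ h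
  have hv' : v * dd a b c = b ^ 2 * a + a ^ 2 * c + c ^ 2 * b - 3 * a * b * c := by
    have e : dd a b c = b ^ 2 + a ^ 2 + c ^ 2 - b * a - a * c - c * b := by unfold dd; ring
    rw [hv, e]
    rw [e] at h
    exact (div_mul_cancel₀ _ h).trans (by ring)
  apply mul_left_cancel₀ (pow_ne_zero 3 h)
  have : dd a b c ^ 3 * ((a + b + c) * u * v - u ^ 3 - v ^ 3) =
    dd a b c * (a + b + c) * (u * dd a b c) * (v * dd a b c) - (u * dd a b c) ^ 3
      - (v * dd a b c) ^ 3 := by ring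
  rw [this, hu', hv']
  unfold dd
  ring

open IntermediateField in
lemma cubic {K L : Type} [Field K] [Field L] [Algebra K L] (F : IntermediateField K L)
    {a b c u v : L} (h : dd a b c ≠ 0) (hab : a - b ≠ 0) (hac : a - c ≠ 0)
    (hu : u = mu a b c) (hv : v = mu b a c)
    (hs : a + b + c ∈ F) (m1 : u ∈ F) (m2 : v ∈ F) :
    ∃ E : IntermediateField K L, F ≤ E ∧ a ∈ E ∧ b ∈ E ∧ c ∈ E ∧
      relrank F E ≤ (3 : ℕ) := by
  have n3 : (3 : L) ∈ F := mem_num F 3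
  have he2 : a * b + a * c + b * c ∈ F := by
    rw [cubic_e2 h hu hv]
    exact sub_mem (mul_mem hs (add_mem m1 m2))
      (mul_mem n3 (add_mem (sub_mem (pow_mem m1 2) (mul_mem m1 m2)) (pow_mem m2 2)))
  have he3 : a * b * c ∈ F := by
    rw [cubic_e3 h hu hv]
    exact sub_mem (sub_mem (mul_mem (mul_mem hs m1) m2) (pow_mem m1 3)) (pow_mem m2 3)
  have hA : a ^ 2 * b + b ^ 2 * c + c ^ 2 * a ∈ F := by
    have hu' : u * dd a b c = a ^ 2 * b + b ^ 2 * c + c ^ 2 * a - 3 * a * b * c := by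
      rw [hu]; exact div_mul_cancel₀ _ h
    have : a ^ 2 * b + b ^ 2 * c + c ^ 2 * a =
      u * ((a + b + c) ^ 2 - 3 * (a * b + a * c + b * c)) + 3 * (a * b * c) := by
      have e : (a + b + c) ^ 2 - 3 * (a * b + a * c + b * c) = dd a b c := by unfold dd; ring
      rw [e, hu']; ring
    rw [this]
    exact add_mem (mul_mem m1 (sub_mem (pow_mem hs 2) (mul_mem n3 he2))) (mul_mem n3 he3)
  obtain ⟨E, hE, haE, hd⟩ := step3 F a _ _ _ (neg_mem hs) he2 (neg_mem he3) (by ring)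
  have hn : b + c ∈ E := by
    convert sub_mem (hE hs) haE using 1; ring
  have hm : b * c ∈ E := by
    convert sub_mem (hE he2) (mul_mem haE hn) using 1; ring
  have hb : b ∈ E := by
    have : b = ((a ^ 2 * b + b ^ 2 * c + c ^ 2 * a) - a * (b + c) * (b + c) + a * (b * c)) /
        (a ^ 2 + b * c - a * (b + c)) := by
      have e : a ^ 2 + b * c - a * (b + c) = (a - b) * (a - c) := by ring
      rw [e]
      field_simp
      ring
    rw [this]
    exact div_mem (add_mem (sub_mem (hE hA) (mul_mem (mul_mem haE hn) hn)) (mul_mem haE hm))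
      (sub_mem (add_mem (pow_mem haE 2) hm) (mul_mem haE hn))
  refine ⟨E, hE, haE, hb, ?_, hd⟩
  convert sub_mem hn hb using 1; ring

open IntermediateField in
lemma chain {K L : Type} [Field K] [Field L] [Algebra K L] {F E G : IntermediateField K L}
    {m n : ℕ} (hFE : F ≤ E) (h1 : relrank F E ≤ m) (hGE : G ≤ E) (h2 : relrank G ⊤ ≤ n) :
    relrank F ⊤ ≤ ((m * n : ℕ) : Cardinal) := by
  have h3 : relrank E ⊤ ≤ n := by
    refine le_trans ?_ h2
    rw [← relrank_mul_relrank hGE le_top]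
    have : 1 ≤ relrank G E := by
      rw [Cardinal.one_le_iff_ne_zero, relrank_eq_rank_of_le hGE]
      exact rank_pos.ne'
    calc relrank E ⊤ = 1 * relrank E ⊤ := (one_mul _).symm
      _ ≤ _ := by gcongr
  rw [← relrank_mul_relrank hFE le_top]
  push_cast
  exact mul_le_mul' h1 h3

open IntermediateField in
lemma chain' {K L : Type} [Field K] [Field L] [Algebra K L] {F E G : IntermediateField K L}
    {m n : ℕ} (hFE : F ≤ E) (h1 : relrank F E ≤ m) (hGE : E ≤ G) (h2 : relrank E G ≤ n) :
    relrank F G ≤ ((m * n : ℕ) : Cardinal) := by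
  rw [← relrank_mul_relrank hFE hGE]
  push_cast
  exact mul_le_mul' h1 h2

open IntermediateField IntermediateField.algebraAdjoinAdjoin in
lemma indep_of_relrank {K L : Type} [Field K] [Field L] [Algebra K L] {n : ℕ} {N : ℕ}
    (htr : (n : Cardinal) ≤ Algebra.trdeg K L) (t : Fin n → L)
    (h : relrank (IntermediateField.adjoin K (Set.range t)) ⊤ ≤ N) :
    AlgebraicIndependent K t := by
  have hfin : Module.rank (IntermediateField.adjoin K (Set.range t)) L < Cardinal.aleph0 := by
    rw [← relrank_top_right]
    exact h.trans_lt (Cardinal.natCast_lt_aleph0)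
  have hfd : FiniteDimensional (IntermediateField.adjoin K (Set.range t)) L :=
    Module.rank_lt_aleph0_iff.mp hfin
  have halg : Algebra.IsAlgebraic (IntermediateField.adjoin K (Set.range t)) L := inferInstance
  have halg2 : Algebra.IsAlgebraic (Algebra.adjoin K (Set.range t)) L := by
    set S := Set.range t
    exact (IsFractionRing.comap_isAlgebraic_iff (A := Algebra.adjoin K S)
      (K := IntermediateField.adjoin K S) (C := L)).mpr halg
  exact (Algebra.IsAlgebraic.isTranscendenceBasis_of_le_trdeg_of_finite K t (by simpa using htr)).1

lemma nv {K L : Type} [Field K] [Field L] [Algebra K L] {t : Fin 8 → L}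
    (ht : AlgebraicIndependent K t) (i : Fin 8) (p : MvPolynomial (Fin 8) K)
    (h : MvPolynomial.eval (fun j => if j = i then 1 else 0) p = 1) :
    MvPolynomial.aeval t p ≠ 0 := by
  intro h0
  rw [ht.eq_zero_of_aeval_eq_zero p h0] at h
  simp at h

lemma nv4 {K L : Type} [Field K] [Field L] [Algebra K L] {t : Fin 8 → L}
    (ht : AlgebraicIndependent K t) (i j k l : Fin 8) (hj : j ≠ i) (hk : k ≠ i) (hl : l ≠ i) :
    t i + t j - t k - t l ≠ 0 := by
  have := nv ht i (.X i + .X j - .X k - .X l) (by simp [hj, hk, hl])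
  simpa using this

lemma nv2 {K L : Type} [Field K] [Field L] [Algebra K L] {t : Fin 8 → L}
    (ht : AlgebraicIndependent K t) (i j : Fin 8) (hj : j ≠ i) :
    t i - t j ≠ 0 := by
  have := nv ht i (.X i - .X j) (by simp [hj])
  simpa using this

lemma nvd {K L : Type} [Field K] [Field L] [Algebra K L] {t : Fin 8 → L}
    (ht : AlgebraicIndependent K t) (i j k : Fin 8) (hj : j ≠ i) (hk : k ≠ i) :
    dd (t i) (t j) (t k) ≠ 0 := by
  have := nv ht i (.X i ^ 2 + .X j ^ 2 + .X k ^ 2 - .X i * .X j - .X j * .X k - .X k * .X i)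
    (by simp [hj, hk])
  simpa [dd] using this

open IntermediateField in
lemma stage1 {K L : Type} [Field K] [Field L] [Algebra K L] {a b c d a' b' c' d' : L} {N : ℕ}
    (hi : AlgebraicIndependent K ![a, b, c, d, a', b', c', d'])
    (h : relrank (IntermediateField.adjoin K (Set.range ![a, b, c, d, a', b', c', d'])) ⊤ ≤ N) :
    relrank (IntermediateField.adjoin K (Set.range
      ![a + b + c + d, rr a b c d, rr a c b d, rr a d b c,
        a' + b' + c' + d', rr a' b' c' d', rr a' c' b' d', rr a' d' b' c'])) ⊤ ≤
      ((4 * 4 * N : ℕ) : Cardinal) := by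
  set F := IntermediateField.adjoin K (Set.range
      ![a + b + c + d, rr a b c d, rr a c b d, rr a d b c,
        a' + b' + c' + d', rr a' b' c' d', rr a' c' b' d', rr a' d' b' c']) with hF
  have hm : ∀ i, ![a + b + c + d, rr a b c d, rr a c b d, rr a d b c,
        a' + b' + c' + d', rr a' b' c' d', rr a' c' b' d', rr a' d' b' c'] i ∈ F :=
    fun i => subset_adjoin K _ (Set.mem_range_self i)
  obtain ⟨E, hFE, ha, hb, hc, hd, hE⟩ := quart F (a := a) (b := b) (c := c) (d := d)
    (nv4 hi 0 1 2 3 (by decide) (by decide) (by decide))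
    (nv4 hi 0 2 1 3 (by decide) (by decide) (by decide))
    (nv4 hi 0 3 1 2 (by decide) (by decide) (by decide))
    (nv2 hi 0 1 (by decide))
    (nv2 hi 0 2 (by decide))
    (nv2 hi 0 3 (by decide))
    rfl rfl rfl (hm 0) (hm 1) (hm 2) (hm 3)
  obtain ⟨E', hEE', ha', hb', hc', hd', hE'⟩ := quart E (a := a') (b := b') (c := c') (d := d')
    (nv4 hi 4 5 6 7 (by decide) (by decide) (by decide))
    (nv4 hi 4 6 5 7 (by decide) (by decide) (by decide))
    (nv4 hi 4 7 5 6 (by decide) (by decide) (by decide))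
    (nv2 hi 4 5 (by decide))
    (nv2 hi 4 6 (by decide))
    (nv2 hi 4 7 (by decide))
    rfl rfl rfl (hFE (hm 4)) (hFE (hm 5)) (hFE (hm 6)) (hFE (hm 7))
  refine chain (hFE.trans hEE') (chain' hFE hE hEE' hE') ?_ h
  rw [adjoin_le_iff, Set.range_subset_iff]
  intro i
  fin_cases i
  exacts [hEE' ha, hEE' hb, hEE' hc, hEE' hd, ha', hb', hc', hd']

open IntermediateField in
lemma stage2 {K L : Type} [Field K] [Field L] [Algebra K L] {s a b c s' a' b' c' : L} {N : ℕ}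
    (hi : AlgebraicIndependent K ![s, a, b, c, s', a', b', c'])
    (h : relrank (IntermediateField.adjoin K (Set.range ![s, a, b, c, s', a', b', c'])) ⊤ ≤ N) :
    relrank (IntermediateField.adjoin K (Set.range
      ![s, a + b + c, mu a b c, mu b a c, s', a' + b' + c', mu a' b' c', mu b' a' c'])) ⊤ ≤
      ((3 * 3 * N : ℕ) : Cardinal) := by
  set F := IntermediateField.adjoin K (Set.range
      ![s, a + b + c, mu a b c, mu b a c, s', a' + b' + c', mu a' b' c', mu b' a' c']) with hF
  have hm : ∀ i, ![s, a + b + c, mu a b c, mu b a c,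
      s', a' + b' + c', mu a' b' c', mu b' a' c'] i ∈ F :=
    fun i => subset_adjoin K _ (Set.mem_range_self i)
  obtain ⟨E, hFE, ha, hb, hc, hE⟩ := cubic F (a := a) (b := b) (c := c)
    (nvd hi 1 2 3 (by decide) (by decide))
    (nv2 hi 1 2 (by decide))
    (nv2 hi 1 3 (by decide))
    rfl rfl (hm 1) (hm 2) (hm 3)
  obtain ⟨E', hEE', ha', hb', hc', hE'⟩ := cubic E (a := a') (b := b') (c := c')
    (nvd hi 5 6 7 (by decide) (by decide))
    (nv2 hi 5 6 (by decide))
    (nv2 hi 5 7 (by decide))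
    rfl rfl (hFE (hm 5)) (hFE (hm 6)) (hFE (hm 7))
  refine chain (hFE.trans hEE') (chain' hFE hE hEE' hE') ?_ h
  rw [adjoin_le_iff, Set.range_subset_iff]
  intro i
  fin_cases i
  exacts [hEE' (hFE (hm 0)), hEE' ha, hEE' hb, hEE' hc, hEE' (hFE (hm 4)), ha', hb', hc']

lemma lin_solve {K L : Type} [Field K] [Field L] [Algebra K L] (E : IntermediateField K L)
    {p q s s' : L} (hpq : p - q ≠ 0) (hp : p ∈ E) (hq : q ∈ E) (h1 : s + s' ∈ E)
    (h2 : p * s + q * s' ∈ E) : s ∈ E ∧ s' ∈ E := by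
  have h : s ∈ E := by
    have : s = ((p * s + q * s') - q * (s + s')) / (p - q) := by
      field_simp
      ring
    rw [this]
    exact div_mem (sub_mem h2 (mul_mem hq h1)) (sub_mem hp hq)
  refine ⟨h, ?_⟩
  convert sub_mem h1 h using 1; ring

/-- The eight generators in terms of the second-stage functions. -/
def gens {L : Type} [Field L] (s e u v s' e' u' v' : L) : Fin 8 → L :=
  ![u + v + u' + v', rr u v u' v', rr u u' v v', rr u v' v u',
    s + s', (u + v) * s + (u' + v') * s', e + e', (u + v) * e + (u' + v') * e']

open IntermediateField in
lemma stage3 {K L : Type} [Field K] [Field L] [Algebra K L] {s e u v s' e' u' v' : L} {N : ℕ}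
    (hi : AlgebraicIndependent K ![s, e, u, v, s', e', u', v'])
    (h : relrank (IntermediateField.adjoin K (Set.range ![s, e, u, v, s', e', u', v'])) ⊤ ≤ N) :
    relrank (IntermediateField.adjoin K (Set.range (gens s e u v s' e' u' v'))) ⊤ ≤
      ((4 * N : ℕ) : Cardinal) := by
  set F := IntermediateField.adjoin K (Set.range (gens s e u v s' e' u' v')) with hF
  have hm : ∀ i, gens s e u v s' e' u' v' i ∈ F :=
    fun i => subset_adjoin K _ (Set.mem_range_self i)
  obtain ⟨E, hFE, hu, hv, hu', hv', hE⟩ := quart F (a := u) (b := v) (c := u') (d := v')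
    (nv4 hi 2 3 6 7 (by decide) (by decide) (by decide))
    (nv4 hi 2 6 3 7 (by decide) (by decide) (by decide))
    (nv4 hi 2 7 3 6 (by decide) (by decide) (by decide))
    (nv2 hi 2 3 (by decide))
    (nv2 hi 2 6 (by decide))
    (nv2 hi 2 7 (by decide))
    rfl rfl rfl (hm 0) (hm 1) (hm 2) (hm 3)
  have hpq : (u + v) - (u' + v') ≠ 0 := by
    rw [← sub_sub]
    exact nv4 hi 2 3 6 7 (by decide) (by decide) (by decide)
  obtain ⟨hs, hs'⟩ := lin_solve E hpq (add_mem hu hv) (add_mem hu' hv')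
    (hFE (hm 4)) (hFE (hm 5))
  obtain ⟨he, he'⟩ := lin_solve E hpq (add_mem hu hv) (add_mem hu' hv')
    (hFE (hm 6)) (hFE (hm 7))
  refine chain hFE hE ?_ h
  rw [adjoin_le_iff, Set.range_subset_iff]
  intro i
  fin_cases i
  exacts [hs, he, hu, hv, hs', he', hu', hv']

lemma rr_swap {L : Type} [Field L] (a b c d : L) : rr c d a b = rr a b c d := by
  unfold rr
  rw [← neg_div_neg_eq]
  congr 1 <;> ring

lemma rr_left {L : Type} [Field L] (a b c d : L) : rr b a c d = rr a b c d := by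
  unfold rr
  congr 1; ring
  ring

lemma rr_right {L : Type} [Field L] (a b c d : L) : rr a b d c = rr a b c d := by
  unfold rr
  congr 1 <;> ring

lemma mu_cyc {L : Type} [Field L] (a b c : L) : mu b c a = mu a b c := by
  unfold mu
  congr 1 <;> ring

lemma map_rr {K L : Type} [Field K] [Field L] [Algebra K L] (f : L ≃ₐ[K] L) (a b c d : L) :
    f (rr a b c d) = rr (f a) (f b) (f c) (f d) := by
  simp [rr, map_div₀]

lemma map_mu {K L : Type} [Field K] [Field L] [Algebra K L] (f : L ≃ₐ[K] L) (a b c : L) :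
    f (mu a b c) = mu (f a) (f b) (f c) := by
  have h3 : f 3 = 3 := map_ofNat f 3
  simp [mu, map_div₀, h3]

/-- Sum. -/
def Sf {L : Type} [Field L] (a b c d : L) : L := a + b + c + d

/-- Sum of the resolvents. -/
def Ef {L : Type} [Field L] (a b c d : L) : L := rr a b c d + rr a c b d + rr a d b c

/-- First A4-invariant. -/
def Uf {L : Type} [Field L] (a b c d : L) : L := mu (rr a b c d) (rr a c b d) (rr a d b c)

/-- Second A4-invariant. -/
def Vf {L : Type} [Field L] (a b c d : L) : L := mu (rr a c b d) (rr a b c d) (rr a d b c)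

lemma symm1 {L : Type} [Field L] (a b c d : L) :
    Sf c d a b = Sf a b c d ∧ Ef c d a b = Ef a b c d ∧ Uf c d a b = Uf a b c d ∧
      Vf c d a b = Vf a b c d := by
  have h2 : rr c a d b = rr a c b d := by rw [rr_left, rr_right]
  have h3 : rr c b d a = rr a d b c := by rw [rr_swap, rr_left, rr_right]
  refine ⟨by unfold Sf; ring, ?_, ?_, ?_⟩ <;> simp only [Ef, Uf, Vf, rr_swap a b c d, h2, h3]

lemma symm2 {L : Type} [Field L] (a b c d : L) :
    Sf a c d b = Sf a b c d ∧ Ef a c d b = Ef a b c d ∧ Uf a c d b = Uf a b c d ∧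
      Vf a c d b = Vf a b c d := by
  have h1 : rr a c d b = rr a c b d := rr_right _ _ _ _
  have h2 : rr a d c b = rr a d b c := rr_right _ _ _ _
  refine ⟨by unfold Sf; ring, ?_, ?_, ?_⟩ <;> simp only [Ef, Uf, Vf, h1, h2]
  · ring
  · exact mu_cyc _ _ _
  · exact (mu_cyc _ _ _).symm

lemma symm3 {L : Type} [Field L] (a b c d : L) :
    Sf b a c d = Sf a b c d ∧ Ef b a c d = Ef a b c d ∧ Uf b a c d = Vf a b c d ∧
      Vf b a c d = Uf a b c d := by
  have h1 : rr b a c d = rr a b c d := rr_left _ _ _ _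
  have h2 : rr b c a d = rr a d b c := rr_swap _ _ _ _
  have h3 : rr b d a c = rr a c b d := rr_swap _ _ _ _
  refine ⟨by unfold Sf; ring, ?_, ?_, ?_⟩ <;> simp only [Ef, Uf, Vf, h1, h2, h3]
  · ring
  · exact (mu_cyc _ _ _).symm.trans (by rw [mu_cyc, mu_cyc, mu_cyc])
  · exact (mu_cyc _ _ _).symm.trans (by rw [mu_cyc, mu_cyc, mu_cyc])

lemma gens_swap {L : Type} [Field L] (s e u v s' e' u' v' : L) :
    gens s e v u s' e' v' u' = gens s e u v s' e' u' v' := by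
  have h1 : rr v u v' u' = rr u v u' v' := by rw [rr_left, rr_right]
  have h2 : rr v v' u u' = rr u u' v v' := rr_swap _ _ _ _
  have h3 : rr v u' u v' = rr u v' v u' := rr_swap _ _ _ _
  simp only [gens, h1, h2, h3]
  congr 1
  · ring
  · rw [add_comm v u, add_comm v' u']

lemma gens_kappa {L : Type} [Field L] (s e u v s' e' u' v' : L) :
    gens s' e' u' v' s e u v = gens s e u v s' e' u' v' := by
  have h1 : rr u' v' u v = rr u v u' v' := rr_swap _ _ _ _
  have h2 : rr u' u v' v = rr u u' v v' := by rw [rr_left, rr_right]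
  have h3 : rr u' v v' u = rr u v' v u' := by rw [rr_swap, rr_left, rr_right]
  simp only [gens, h1, h2, h3]
  funext i
  fin_cases i <;> simp <;> ring

/-- Generators of the group. -/
abbrev g1 : Equiv.Perm (Fin 8) := Equiv.swap (0 : Fin 8) 2 * Equiv.swap 1 3

/-- Second generator. -/
abbrev g2 : Equiv.Perm (Fin 8) := Equiv.swap (1 : Fin 8) 2 * Equiv.swap 2 3

/-- Third generator. -/
abbrev g3 : Equiv.Perm (Fin 8) := Equiv.swap (0 : Fin 8) 1 * Equiv.swap 4 5

/-- Fourth generator. -/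
abbrev g4 : Equiv.Perm (Fin 8) :=
  Equiv.swap (0 : Fin 8) 4 * Equiv.swap 1 5 * Equiv.swap 2 6 * Equiv.swap 3 7

/-- The group. -/
abbrev GG : Subgroup (Equiv.Perm (Fin 8)) := Subgroup.closure {g1, g2, g3, g4}

/-- The stabilizer of a point inside `H`. -/
def stab (H : Subgroup (Equiv.Perm (Fin 8))) (p : Fin 8) : Subgroup (Equiv.Perm (Fin 8)) :=
  H ⊓ MulAction.stabilizer (Equiv.Perm (Fin 8)) p

lemma mem_stab {H : Subgroup (Equiv.Perm (Fin 8))} {p : Fin 8} {g : Equiv.Perm (Fin 8)} :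
    g ∈ stab H p ↔ g ∈ H ∧ g p = p := by
  simp [stab, MulAction.mem_stabilizer_iff]

lemma card_stab (H : Subgroup (Equiv.Perm (Fin 8))) (p : Fin 8) {m : ℕ}
    (t : Fin m → Equiv.Perm (Fin 8)) (ht : ∀ i, t i ∈ H)
    (hinj : Function.Injective fun i => t i p) :
    m * Nat.card (stab H p) ≤ Nat.card H := by
  have h : Nat.card (Fin m × stab H p) = m * Nat.card (stab H p) := by simp
  rw [← h]
  refine Nat.card_le_card_of_injective
    (fun x => (⟨t x.1 * x.2.1, H.mul_mem (ht _) (mem_stab.1 x.2.2).1⟩ : H)) ?_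
  rintro ⟨i, x⟩ ⟨j, y⟩ hxy
  have hxy' : t i * x.1 = t j * y.1 := congrArg Subtype.val hxy
  have hij : i = j := by
    apply hinj
    have := congrArg (fun g : Equiv.Perm (Fin 8) => g p) hxy'
    simpa [(mem_stab.1 x.2).2, (mem_stab.1 y.2).2] using this
  subst hij
  have := mul_left_cancel hxy'
  ext1
  · rfl
  · exact Subtype.ext this

set_option maxRecDepth 8000 in
lemma card_GG : 576 ≤ Nat.card GG := by
  have m1 : g1 ∈ GG := Subgroup.subset_closure (by simp)
  have m2 : g2 ∈ GG := Subgroup.subset_closure (by simp)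
  have m3 : g3 ∈ GG := Subgroup.subset_closure (by simp)
  have m4 : g4 ∈ GG := Subgroup.subset_closure (by simp)
  have mv : g2 * g1 * g2⁻¹ ∈ GG := GG.mul_mem (GG.mul_mem m2 m1) (GG.inv_mem m2)
  have mw : g2⁻¹ * g1 * g2 ∈ GG := GG.mul_mem (GG.mul_mem (GG.inv_mem m2) m1) m2
  have cj : ∀ g, g ∈ GG → g4 * g * g4 ∈ GG := fun g h => GG.mul_mem (GG.mul_mem m4 h) m4
  have s1 := card_stab GG 0 ![1, g1, g2 * g1 * g2⁻¹, g2⁻¹ * g1 * g2, g4, g4 * g1,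
    g4 * (g2 * g1 * g2⁻¹), g4 * (g2⁻¹ * g1 * g2)] (by
      intro i
      fin_cases i
      exacts [GG.one_mem, m1, mv, mw, m4, GG.mul_mem m4 m1, GG.mul_mem m4 mv, GG.mul_mem m4 mw])
      (by decide)
  have s2 := card_stab (stab GG 0) 1 ![1, g2, g2⁻¹] (by
      intro i
      fin_cases i
      exacts [mem_stab.2 ⟨GG.one_mem, by decide⟩, mem_stab.2 ⟨m2, by decide⟩,
        mem_stab.2 ⟨GG.inv_mem m2, by decide⟩])
      (by decide)
  have st : ∀ g, g ∈ GG → g 0 = 0 → g 1 = 1 → g ∈ stab (stab GG 0) 1 := fun g h h0 h1 =>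
    mem_stab.2 ⟨mem_stab.2 ⟨h, h0⟩, h1⟩
  have s3 := card_stab (stab (stab GG 0) 1) 4 ![1, g4 * g1 * g4, g4 * (g2 * g1 * g2⁻¹) * g4,
      g4 * (g2⁻¹ * g1 * g2) * g4] (by
      intro i
      fin_cases i
      exacts [st _ GG.one_mem (by decide) (by decide), st _ (cj _ m1) (by decide) (by decide),
        st _ (cj _ mv) (by decide) (by decide), st _ (cj _ mw) (by decide) (by decide)])
      (by decide)
  have s4 := card_stab (stab (stab (stab GG 0) 1) 4) 5 ![1, g4 * g2 * g4, g4 * g2⁻¹ * g4] (by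
      intro i
      fin_cases i
      exacts [mem_stab.2 ⟨st _ GG.one_mem (by decide) (by decide), by decide⟩,
        mem_stab.2 ⟨st _ (cj _ m2) (by decide) (by decide), by decide⟩,
        mem_stab.2 ⟨st _ (cj _ (GG.inv_mem m2)) (by decide) (by decide), by decide⟩])
      (by decide)
  have m5 : (g1 * (g4 * g1 * g4)) * g3 * (g1 * (g4 * g1 * g4)) ∈ GG :=
    GG.mul_mem (GG.mul_mem (GG.mul_mem m1 (cj _ m1)) m3) (GG.mul_mem m1 (cj _ m1))
  have s5 := card_stab (stab (stab (stab (stab GG 0) 1) 4) 5) 2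
    ![1, (g1 * (g4 * g1 * g4)) * g3 * (g1 * (g4 * g1 * g4))] (by
      intro i
      fin_cases i
      exacts [mem_stab.2 ⟨mem_stab.2 ⟨st _ GG.one_mem (by decide) (by decide), by decide⟩,
          by decide⟩,
        mem_stab.2 ⟨mem_stab.2 ⟨st _ m5 (by decide) (by decide), by decide⟩, by decide⟩])
      (by decide)
  have s6 : 0 < Nat.card (stab (stab (stab (stab (stab GG 0) 1) 4) 5) 2) := Nat.card_pos
  omega

lemma permHom_Xvar (K : Type) [Field K] (σ : Equiv.Perm (Fin 8)) (i : Fin 8) :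
    permHom K (Fin 8) σ (Xvar K (Fin 8) i) = Xvar K (Fin 8) (σ i) := by
  simp [permHom, Xvar, renameHom]

lemma Xvar_indep (K : Type) [Field K] : AlgebraicIndependent K (Xvar K (Fin 8)) := by
  have h := MvPolynomial.algebraicIndependent_X (Fin 8) K
  exact h.map' (f := IsScalarTower.toAlgHom K (MvPolynomial (Fin 8) K) (RFF K (Fin 8)))
    (IsFractionRing.injective _ _)

lemma Xvar_adjoin (K : Type) [Field K] :
    IntermediateField.adjoin K (Set.range (Xvar K (Fin 8))) = ⊤ := by
  rw [eq_top_iff]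
  intro x _
  obtain ⟨p, q, hq, rfl⟩ := IsFractionRing.div_surjective (A := MvPolynomial (Fin 8) K) x
  have key : ∀ p : MvPolynomial (Fin 8) K, algebraMap _ (RFF K (Fin 8)) p ∈
      IntermediateField.adjoin K (Set.range (Xvar K (Fin 8))) := by
    intro p
    induction p using MvPolynomial.induction_on with
    | C a =>
      have : algebraMap (MvPolynomial (Fin 8) K) (RFF K (Fin 8)) (MvPolynomial.C a) =
        algebraMap K _ a := by
          rw [IsScalarTower.algebraMap_apply K (MvPolynomial (Fin 8) K) (RFF K (Fin 8))]; rfl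
      rw [this]
      exact IntermediateField.algebraMap_mem _ _
    | add p q hp hq => rw [map_add]; exact add_mem hp hq
    | mul_X p i hp =>
      rw [map_mul]
      exact mul_mem hp (IntermediateField.subset_adjoin K _ ⟨i, rfl⟩)
  exact div_mem (key p) (key q)

lemma permHom_inj (K : Type) [Field K] : Function.Injective (permHom K (Fin 8)) := by
  intro σ τ h
  ext i
  have h1 := congrArg (fun f => f (Xvar K (Fin 8) i)) h
  simp only [permHom_Xvar] at h1
  rw [(Xvar_indep K).injective h1]

/-- The eight generators of the fixed field. -/
def gx (K : Type) [Field K] (x : Fin 8 → RFF K (Fin 8)) : Fin 8 → RFF K (Fin 8) :=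
  gens (Sf (x 0) (x 1) (x 2) (x 3)) (Ef (x 0) (x 1) (x 2) (x 3)) (Uf (x 0) (x 1) (x 2) (x 3))
    (Vf (x 0) (x 1) (x 2) (x 3))
    (Sf (x 4) (x 5) (x 6) (x 7)) (Ef (x 4) (x 5) (x 6) (x 7)) (Uf (x 4) (x 5) (x 6) (x 7))
    (Vf (x 4) (x 5) (x 6) (x 7))

lemma map_gens {K L : Type} [Field K] [Field L] [Algebra K L] (f : L ≃ₐ[K] L)
    (s e u v s' e' u' v' : L) (i : Fin 8) : f (gens s e u v s' e' u' v' i) =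
      gens (f s) (f e) (f u) (f v) (f s') (f e') (f u') (f v') i := by
  fin_cases i <;> simp [gens, map_rr]

lemma map_gx (K : Type) [Field K] (σ : Equiv.Perm (Fin 8)) (i : Fin 8) :
    permHom K (Fin 8) σ (gx K (Xvar K (Fin 8)) i) = gx K (fun j => Xvar K (Fin 8) (σ j)) i := by
  unfold gx
  rw [map_gens]
  simp only [Sf, Ef, Uf, Vf, map_rr, map_mu, map_add, permHom_Xvar]

lemma gx_fix (K : Type) [Field K] (x : Fin 8 → RFF K (Fin 8)) :
    gx K (fun j => x (g1 j)) = gx K x ∧ gx K (fun j => x (g2 j)) = gx K x ∧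
    gx K (fun j => x (g3 j)) = gx K x ∧ gx K (fun j => x (g4 j)) = gx K x := by
  refine ⟨?_, ?_, ?_, ?_⟩
  · obtain ⟨a, b, c, d⟩ := symm1 (x 0) (x 1) (x 2) (x 3)
    conv_rhs => rw [gx, ← a, ← b, ← c, ← d]
    rfl
  · obtain ⟨a, b, c, d⟩ := symm2 (x 0) (x 1) (x 2) (x 3)
    conv_rhs => rw [gx, ← a, ← b, ← c, ← d]
    rfl
  · obtain ⟨a, b, c, d⟩ := symm3 (x 0) (x 1) (x 2) (x 3)
    obtain ⟨a', b', c', d'⟩ := symm3 (x 4) (x 5) (x 6) (x 7)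
    conv_rhs => rw [gx, ← gens_swap, ← a, ← b, ← c, ← d, ← a', ← b', ← c', ← d']
    rfl
  · exact gens_kappa _ _ _ _ _ _ _ _

open IntermediateField in
lemma gx_le (K : Type) [Field K] :
    IntermediateField.adjoin K (Set.range (gx K (Xvar K (Fin 8)))) ≤ fixedSub K (Fin 8) GG := by
  unfold fixedSub
  rw [IntermediateField.le_iff_le, Subgroup.map_le_iff_le_comap, Subgroup.closure_le]
  have key : ∀ σ : Equiv.Perm (Fin 8), gx K (fun j => Xvar K (Fin 8) (σ j)) = gx K (Xvar K (Fin 8)) →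
      σ ∈ (Subgroup.comap (permHom K (Fin 8)) (IntermediateField.fixingSubgroup
        (IntermediateField.adjoin K (Set.range (gx K (Xvar K (Fin 8))))))) := by
    intro σ h
    rw [Subgroup.mem_comap, ← Subgroup.zpowers_le, ← IntermediateField.le_iff_le, adjoin_le_iff,
      Set.range_subset_iff]
    intro i
    rw [SetLike.mem_coe, IntermediateField.mem_fixedField_iff]
    intro f hf
    have h0 : permHom K (Fin 8) σ ∈ MulAction.stabilizer (RFF K (Fin 8) ≃ₐ[K] RFF K (Fin 8))
        (gx K (Xvar K (Fin 8)) i) := by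
      rw [MulAction.mem_stabilizer_iff]
      exact (map_gx K σ i).trans (by rw [h])
    exact MulAction.mem_stabilizer_iff.1 ((Subgroup.zpowers_le.2 h0) hf)
  obtain ⟨h1, h2, h3, h4⟩ := gx_fix K (Xvar K (Fin 8))
  rintro σ (rfl | rfl | rfl | rfl)
  exacts [key _ h1, key _ h2, key _ h3, key _ h4]

open IntermediateField in
lemma gx_stage (K : Type) [Field K] :
    AlgebraicIndependent K (gx K (Xvar K (Fin 8))) ∧
    relrank (IntermediateField.adjoin K (Set.range (gx K (Xvar K (Fin 8))))) ⊤ ≤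
      ((576 : ℕ) : Cardinal) := by
  have htr : ((8 : ℕ) : Cardinal) ≤ Algebra.trdeg K (RFF K (Fin 8)) := by
    simpa using (Xvar_indep K).cardinalMk_le_trdeg
  set x := Xvar K (Fin 8) with hx
  have hxv : ![x 0, x 1, x 2, x 3, x 4, x 5, x 6, x 7] = x := by
    funext i
    fin_cases i <;> rfl
  have i0 : AlgebraicIndependent K ![x 0, x 1, x 2, x 3, x 4, x 5, x 6, x 7] := by
    rw [hxv]; exact Xvar_indep K
  have r0 : relrank (IntermediateField.adjoin K
      (Set.range ![x 0, x 1, x 2, x 3, x 4, x 5, x 6, x 7])) ⊤ ≤ ((1 : ℕ) : Cardinal) := by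
    rw [hxv, hx, Xvar_adjoin]
    simp
  have r1 := stage1 i0 r0
  have i1 := indep_of_relrank htr _ r1
  have r2 := stage2 i1 r1
  have i2 := indep_of_relrank htr _ r2
  have r3 := stage3 i2 r2
  have i3 := indep_of_relrank htr _ r3
  exact ⟨i3, r3⟩

lemma fixed_finrank (K : Type) [Field K] :
    576 ≤ Module.finrank (fixedSub K (Fin 8) GG) (RFF K (Fin 8)) := by
  have hc : Nat.card (GG.map (permHom K (Fin 8))) = Nat.card GG :=
    Nat.card_congr (GG.equivMapOfInjective _ (permHom_inj K)).symm.toEquiv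
  have hfin : Finite (GG.map (permHom K (Fin 8))) :=
    Finite.of_equiv _ (GG.equivMapOfInjective _ (permHom_inj K)).toEquiv
  have := Fintype.ofFinite (GG.map (permHom K (Fin 8)))
  have h : Module.finrank (fixedSub K (Fin 8) GG) (RFF K (Fin 8)) =
      Nat.card (GG.map (permHom K (Fin 8))) := by
    rw [Nat.card_eq_fintype_card]
    exact FixedPoints.finrank_eq_card (GG.map (permHom K (Fin 8))) (RFF K (Fin 8))
  rw [h, hc]
  exact card_GG

open IntermediateField in
lemma gx_eq (K : Type) [Field K] :
    IntermediateField.adjoin K (Set.range (gx K (Xvar K (Fin 8)))) = fixedSub K (Fin 8) GG := by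
  refine le_antisymm (gx_le K) ?_
  have h := (gx_stage K).2
  rw [← relrank_mul_relrank (gx_le K) le_top] at h
  have h1 := fixed_finrank K
  have h2 : ((576 : ℕ) : Cardinal) ≤ relrank (fixedSub K (Fin 8) GG) ⊤ := by
    rw [relrank_top_right]
    have hf : Module.Finite (fixedSub K (Fin 8) GG) (RFF K (Fin 8)) :=
      Module.finite_of_finrank_pos (by omega)
    rw [← Module.finrank_eq_rank]
    exact_mod_cast h1
  have h3 : relrank (IntermediateField.adjoin K (Set.range (gx K (Xvar K (Fin 8)))))
      (fixedSub K (Fin 8) GG) ≠ 0 := by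
    intro h0
    have h4 := relrank_mul_relrank (gx_le K) (le_top (a := fixedSub K (Fin 8) GG))
    rw [h0, zero_mul, relrank_top_right] at h4
    exact rank_pos.ne h4
  rw [← relrank_eq_one_iff]
  generalize relrank (IntermediateField.adjoin K (Set.range (gx K (Xvar K (Fin 8)))))
    (fixedSub K (Fin 8) GG) = c at h h3 ⊢
  by_contra hc
  have h5 : 1 < c := lt_of_le_of_ne (Cardinal.one_le_iff_ne_zero.2 h3) (Ne.symm hc)
  have h6 : ((2 : ℕ) : Cardinal) ≤ c := by
    have := Order.succ_le_of_lt h5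
    rwa [← Nat.cast_one, ← Cardinal.nat_succ] at this
  have h7 := (mul_le_mul' h6 h2).trans h
  rw [← Nat.cast_mul, Nat.cast_le] at h7
  omega

open IntermediateField in
lemma rat_of_eq {K L : Type} [Field K] [Field L] [Algebra K L] {t : Fin 8 → L}
    (F : IntermediateField K L) (hi : AlgebraicIndependent K t)
    (h : IntermediateField.adjoin K (Set.range t) = F) : IsRatExt K F := by
  have hm : ∀ i, t i ∈ F := fun i => h ▸ subset_adjoin K _ (Set.mem_range_self i)
  refine ⟨8, fun i => ⟨t i, hm i⟩, ?_, ?_⟩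
  · exact AlgebraicIndependent.of_comp F.val hi
  · apply IntermediateField.lift_injective
    rw [lift_adjoin, lift_top, ← Set.range_comp]
    exact h

/-- **Rationality for `G₄₅`.** For any field `K`, the subgroup `G₄₅ ⊆ S₈` of order 576 generated by `(1,3)(2,4)`, `(2,3,4)`, `(1,2)(5,6)` and `κ = (1,5)(2,6)(3,7)(4,8)` has `K`-rational fixed field. -/
theorem rationality_G45 (K : Type) [Field K] :
    IsRatExt K ↥(fixedSub K (Fin 8) (Subgroup.closure
      {Equiv.swap (0 : Fin 8) 2 * Equiv.swap 1 3,
       Equiv.swap (1 : Fin 8) 2 * Equiv.swap 2 3,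
       Equiv.swap (0 : Fin 8) 1 * Equiv.swap 4 5,
       Equiv.swap (0 : Fin 8) 4 * Equiv.swap 1 5 * Equiv.swap 2 6 * Equiv.swap 3 7})) := by
  exact rat_of_eq _ (gx_stage K).1 (gx_eq K)
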